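/- For each n ∈ ℕ, let Mₙ be the Nmatrix with truth values V = {a₀, …, aₙ, 1}, designated set D = {1}, and interpretation ⊞ₙ given by: ⊞ₙ(1,x) = ⊞ₙ(x,1) = {1, x} for every x ∈ V; ⊞ₙ(a₀,aₙ) = ⊞ₙ(aₙ,a₀) = {1, a₀}; and ⊞ₙ(aᵢ,aⱼ) = {a_{max(0, min(i,j)−1)}} for all other pairs (i.e. when {i,j} ≠ {0,n}). Then: (i) {p, q} ⊢_{Mₙ} p⊞q; (ii) {⊞ᵏ(p)} ⊢_{Mₙ} p for every k ≤ n; and (iii) {⊞^{n+1}(p)} ⊬_{Mₙ} p. -/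

import Mathlib

/-- Formulas built from countably many propositional variables with a single
binary connective `⊞` (platypus). -/
inductive Fm : Type where
  | var : ℕ → Fm
  | pl : Fm → Fm → Fm
deriving DecidableEq

namespace Fm

/-- The set of propositional variables occurring in a formula. -/
def vars : Fm → Set ℕ
  | var n => {n}
  | pl a b => vars a ∪ vars b

/-- A `𝔅_⊞`-valuation: a two-valued function such that
`v (φ ⊞ ψ) ∈ {min (v φ) (v ψ), max (v φ) (v ψ)}`. -/
def IsVal (v : Fm → Bool) : Prop :=
  ∀ a b : Fm, v (a.pl b) = (v a && v b) ∨ v (a.pl b) = (v a || v b)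

/-- The multiple-conclusion consequence `Γ ⊩_⊞ Δ`. -/
def Mc (Γ Δ : Set Fm) : Prop :=
  ∀ v : Fm → Bool, IsVal v → (∀ φ ∈ Γ, v φ = true) → ∃ ψ ∈ Δ, v ψ = true

/-- The single-conclusion consequence `Γ ⊢_⊞ φ`. -/
def Sc (Γ : Set Fm) (φ : Fm) : Prop := Mc Γ {φ}

end Fm

namespace Fm

/-- Iterated platypus: `⊞⁰(φ) = φ`, `⊞^{k+1}(φ) = (⊞ᵏ(φ)) ⊞ φ`. -/
def iter (φ : Fm) : ℕ → Fm
  | 0 => φ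
  | n + 1 => (iter φ n).pl φ

/-- An `M`-valuation for an Nmatrix `⟨V, op, D⟩` with `op : V → V → ℘(V)∖{∅}`. -/
def IsNVal {V : Type} (op : V → V → Set V) (v : Fm → V) : Prop :=
  ∀ a b : Fm, v (a.pl b) ∈ op (v a) (v b)

/-- The single-conclusion consequence `Γ ⊢_M φ` of an Nmatrix. -/
def NSc {V : Type} (op : V → V → Set V) (D : Set V) (Γ : Set Fm) (φ : Fm) : Prop :=
  ∀ v : Fm → V, IsNVal op v → (∀ ψ ∈ Γ, v ψ ∈ D) → v φ ∈ D

/-- The interpretation `⊞ₙ` of the Nmatrix `Mₙ`: truth values are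
`Fin (n+2)`, where `⟨i, _⟩` with `i ≤ n` is `aᵢ` and `Fin.last (n+1)` is the
designated value `1`.  `⊞ₙ(1,x) = ⊞ₙ(x,1) = {1,x}`;
`⊞ₙ(a₀,aₙ) = ⊞ₙ(aₙ,a₀) = {1,a₀}`; otherwise
`⊞ₙ(aᵢ,aⱼ) = {a_{max(0, min i j − 1)}}`. -/
def opM (n : ℕ) (x y : Fin (n + 2)) : Set (Fin (n + 2)) :=
  if x = Fin.last (n + 1) then {Fin.last (n + 1), y}
  else if y = Fin.last (n + 1) then {Fin.last (n + 1), x}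
  else if (x.val = 0 ∧ y.val = n) ∨ (x.val = n ∧ y.val = 0) then
    {Fin.last (n + 1), ⟨0, by omega⟩}
  else {⟨min x.val y.val - 1, by have := x.isLt; omega⟩}

end Fm

namespace Fm

theorem iter_val (n : ℕ) (v : Fm → Fin (n + 2)) (hv : IsNVal (opM n) v) (φ : Fm)
    (h : v φ ≠ Fin.last (n + 1)) (k : ℕ) (hk : k ≤ n) :
    (v (φ.iter k)).val = (v φ).val - k := by
  have hlt : (v φ).val < n + 1 := by
    have h1 := (v φ).isLt
    have h2 : (v φ).val ≠ n + 1 := fun e => h (Fin.ext e)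
    omega
  induction k with
  | zero => simp [iter]
  | succ k ih =>
    have ih := ih (by omega)
    have hs := hv (φ.iter k) φ
    have hne : v (φ.iter k) ≠ Fin.last (n + 1) := by
      intro e
      rw [e, Fin.val_last] at ih
      omega
    unfold opM at hs
    rw [if_neg hne, if_neg h, if_neg (by omega)] at hs
    have hs := congrArg Fin.val (Set.mem_singleton_iff.mp hs)
    simp only [iter]
    rw [hs]
    simp only
    omega

/-- A choice from the interpretation preferring the designated value. -/
def chM (n : ℕ) (x y : Fin (n + 2)) : Fin (n + 2) :=
  if x = Fin.last (n + 1) then Fin.last (n + 1)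
  else if y = Fin.last (n + 1) then Fin.last (n + 1)
  else if (x.val = 0 ∧ y.val = n) ∨ (x.val = n ∧ y.val = 0) then Fin.last (n + 1)
  else ⟨min x.val y.val - 1, by have := x.isLt; omega⟩

theorem chM_mem (n : ℕ) (x y : Fin (n + 2)) : chM n x y ∈ opM n x y := by
  unfold chM opM
  split_ifs <;> simp

/-- The countermodel valuation. -/
def cval (n : ℕ) : Fm → Fin (n + 2)
  | var _ => ⟨n, by omega⟩
  | pl a b => chM n (cval n a) (cval n b)

end Fm

open Fm in
/-- in the Nmatrix `Mₙ = ⟨{a₀,…,aₙ,1}, ⊞ₙ, {1}⟩`: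
(i) `{p, q} ⊢_{Mₙ} p ⊞ q`; (ii) `{⊞ᵏ(p)} ⊢_{Mₙ} p` for every `k ≤ n`;
(iii) `{⊞^{n+1}(p)} ⊬_{Mₙ} p`. -/
theorem platypus_matrix_Mn (n : ℕ) :
    (∀ p q : ℕ, p ≠ q →
      NSc (opM n) {Fin.last (n + 1)} {Fm.var p, Fm.var q}
        ((Fm.var p).pl (Fm.var q))) ∧
    (∀ (p : ℕ) (k : ℕ), k ≤ n →
      NSc (opM n) {Fin.last (n + 1)} {(Fm.var p).iter k} (Fm.var p)) ∧
    (∀ p : ℕ,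
      ¬ NSc (opM n) {Fin.last (n + 1)} {(Fm.var p).iter (n + 1)} (Fm.var p)) := by
  refine ⟨?_, ?_, ?_⟩
  · intro p q _ v hv h
    have hp : v (var p) = Fin.last (n + 1) := h _ (by simp)
    have hq : v (var q) = Fin.last (n + 1) := h _ (by simp)
    have := hv (var p) (var q)
    rw [hp, hq] at this
    simpa [opM] using this
  · intro p k hk v hv h
    by_contra hne
    have hne : v (var p) ≠ Fin.last (n + 1) := hne
    have h1 : v ((var p).iter k) = Fin.last (n + 1) := h _ rfl
    have h2 := iter_val n v hv _ hne k hk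
    have h3 : (v (var p)).val ≠ n + 1 := fun e => hne (Fin.ext e)
    have h4 := (v (var p)).isLt
    rw [h1, Fin.val_last] at h2
    omega
  · intro p h
    have hv : IsNVal (opM n) (cval n) := fun a b => chM_mem n _ _
    have h0 : (cval n (var p)).val = n := rfl
    have hne : cval n (var p) ≠ Fin.last (n + 1) := by
      intro e
      rw [e, Fin.val_last] at h0
      omega
    refine hne (h (cval n) hv ?_)
    rintro ψ rfl
    have h2 := iter_val n _ hv _ hne n le_rfl
    change chM n (cval n ((var p).iter n)) (cval n (var p)) = Fin.last (n + 1)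
    unfold chM
    rw [if_neg, if_neg hne, if_pos (by omega)]
    intro e
    rw [e, Fin.val_last] at h2
    omega
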